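/- 2·∑_{n=1}^∞ (-1)^{n-1}·4^{n-1} / (n² · C(2n,n)) = log²2 - (∑_{n=1}^∞ (-1)ⁿ·C(2n,n)/(4ⁿ · n))·log 2 + (1/2)·∑_{n=1}^∞ ((-1)^{n+1}·C(2n,n)/(4ⁿ · n²))·(2 + 2n(H_{n-1} - H_{2n-1})), where all three series converge. -/

import Mathlib

open Real Set Filter Topology

namespace AIC

/-- Absolute convergence inside the unit disc. -/
def P (a : ℕ → ℝ) : Prop := ∀ r : ℝ, 0 ≤ r → r < 1 → Summable (fun n => |a n| * r ^ n)

/-- The power series. -/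
noncomputable def f (a : ℕ → ℝ) (t : ℝ) : ℝ := ∑' n, a n * t ^ n

lemma P.summable {a : ℕ → ℝ} (h : P a) {t : ℝ} (h0 : 0 ≤ t) (h1 : t < 1) :
    Summable (fun n => a n * t ^ n) := by
  apply Summable.of_norm
  have := h t h0 h1
  refine this.congr fun n => ?_
  rw [norm_mul, Real.norm_eq_abs, norm_pow, Real.norm_eq_abs, abs_of_nonneg h0]

lemma P_of_bdd {a : ℕ → ℝ} (K : ℝ) (h : ∀ n, |a n| ≤ K) : P a := by
  intro r h0 h1
  refine Summable.of_nonneg_of_le (fun n => by positivity) (fun n => ?_)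
    ((summable_geometric_of_lt_one h0 h1).mul_left K)
  exact mul_le_mul_of_nonneg_right (h n) (by positivity)

lemma P.mul_n {a : ℕ → ℝ} (h : P a) : P (fun n => (n : ℝ) * a n) := by
  intro r h0 h1
  obtain ⟨q, hq1, hq2⟩ := exists_between h1
  have hq0 : 0 < q := lt_of_le_of_lt h0 hq1
  have hs := h q hq0.le hq2
  have hx : r / q < 1 := (div_lt_one hq0).2 hq1
  have hx0 : 0 ≤ r / q := by positivity
  have ht := tendsto_self_mul_const_pow_of_lt_one hx0 hx
  obtain ⟨K, hK⟩ := ht.bddAbove_range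
  refine Summable.of_nonneg_of_le (fun n => by positivity) (fun n => ?_) (hs.mul_left K)
  have h2 : (n : ℝ) * (r / q) ^ n ≤ K := hK ⟨n, rfl⟩
  have h3 : |(n : ℝ) * a n| * r ^ n = ((n : ℝ) * (r / q) ^ n) * (|a n| * q ^ n) := by
    rw [abs_mul, Nat.abs_cast, div_pow]
    field_simp
  rw [h3]
  exact mul_le_mul_of_nonneg_right h2 (by positivity)

lemma P.shift {a : ℕ → ℝ} (h : P a) : P (fun n => a (n + 1)) := by
  intro r h0 h1
  rcases h0.eq_or_lt with rfl | h0'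
  · apply summable_of_ne_finset_zero (s := {0})
    intro n hn
    simp at hn
    simp [hn]
  · have := ((summable_nat_add_iff 1).2 (h r h0 h1)).mul_left (1 / r)
    refine this.congr fun n => ?_
    field_simp
    ring

lemma P.der {a : ℕ → ℝ} (h : P a) : P (fun n => ((n : ℝ) + 1) * a (n + 1)) := by
  have := h.mul_n.shift
  simpa using this

lemma f_split {a : ℕ → ℝ} (h : P a) {t : ℝ} (h0 : 0 ≤ t) (h1 : t < 1) :
    f a t = a 0 + t * f (fun n => a (n + 1)) t := by
  unfold f
  rw [(h.summable h0 h1).tsum_eq_zero_add, ← tsum_mul_left]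
  simp only [pow_zero, mul_one]
  congr 1
  apply tsum_congr
  intro n
  ring

lemma f_hasDerivAt {a : ℕ → ℝ} (h : P a) {t : ℝ} (h0 : 0 < t) (h1 : t < 1) :
    HasDerivAt (f a) (f (fun n => ((n : ℝ) + 1) * a (n + 1)) t) t := by
  obtain ⟨q, hq1, hq2⟩ := exists_between h1
  have hq0 : 0 < q := h0.trans hq1
  have hn := (h.mul_n.summable (t := t) h0.le h1)
  have key := hasDerivAt_tsum_of_isPreconnected (𝕜 := ℝ) (F := ℝ)
    (u := fun n : ℕ => |((n : ℝ)) * a n| * q ^ n * (1 / q))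
    (g := fun (n : ℕ) y => a n * y ^ n) (g' := fun (n : ℕ) y => a n * ((n : ℝ) * y ^ (n - 1)))
    (t := Ioo (-q) q) (y₀ := t) (y := t) ((h.mul_n q hq0.le hq2).mul_right _) isOpen_Ioo
    isPreconnected_Ioo (fun n y _ => (hasDerivAt_pow n y).const_mul _) ?_
    ⟨by linarith, hq1⟩ (h.summable h0.le h1) ⟨by linarith, hq1⟩
  · have e : f (fun n => ((n : ℝ) + 1) * a (n + 1)) t = ∑' n, a n * ((n : ℝ) * t ^ (n - 1)) := by
      have hs : Summable (fun n => a n * ((n : ℝ) * t ^ (n - 1))) := by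
        refine (hn.mul_right (1 / t)).congr fun n => ?_
        rcases n with _ | n
        · simp
        · simp only [Nat.add_sub_cancel]
          field_simp
          ring
      rw [hs.tsum_eq_zero_add]
      unfold f
      simp only [Nat.cast_zero, zero_mul, mul_zero, zero_add]
      apply tsum_congr
      intro n
      simp only [Nat.add_sub_cancel]
      push_cast
      ring
    rw [e]
    exact key
  · intro n y hy
    rcases n with _ | n
    · simp
    · have hy' : |y| ≤ q := abs_le.2 ⟨hy.1.le, hy.2.le⟩
      rw [Real.norm_eq_abs, abs_mul, abs_mul, abs_mul, abs_pow, Nat.add_sub_cancel, Nat.abs_cast]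
      have : |y| ^ n ≤ q ^ n := pow_le_pow_left₀ (abs_nonneg _) hy' n
      have e2 : ((n + 1 : ℕ) : ℝ) * |a (n + 1)| * q ^ (n + 1) * (1 / q)
          = |a (n + 1)| * (((n + 1 : ℕ) : ℝ) * q ^ n) := by
        field_simp
        ring
      rw [e2]
      gcongr

lemma f_t_der {a : ℕ → ℝ} (h : P a) {t : ℝ} (h0 : 0 ≤ t) (h1 : t < 1) :
    t * f (fun n => ((n : ℝ) + 1) * a (n + 1)) t = f (fun n => (n : ℝ) * a n) t := by
  rw [f_split h.mul_n h0 h1]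
  simp

lemma f_cont {a : ℕ → ℝ} (h : P a) {x : ℝ} (h0 : 0 ≤ x) (h1 : x < 1) :
    ContinuousOn (f a) (Icc 0 x) := by
  refine continuousOn_tsum (u := fun n => |a n| * x ^ n) (fun n => by fun_prop) (h x h0 h1) ?_
  intro n y hy
  rw [norm_mul, norm_pow, Real.norm_eq_abs, Real.norm_eq_abs, abs_of_nonneg hy.1]
  have := hy.1
  have := hy.2
  gcongr

lemma f_cont_one {a : ℕ → ℝ} (h : Summable (fun n => |a n|)) :
    ContinuousOn (f a) (Icc 0 1) := by
  refine continuousOn_tsum (u := fun n => |a n|) (fun n => by fun_prop) h ?_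
  intro n y hy
  rw [norm_mul, norm_pow, Real.norm_eq_abs, Real.norm_eq_abs, abs_of_nonneg hy.1]
  exact mul_le_of_le_one_right (abs_nonneg _) (pow_le_one₀ hy.1 hy.2)

lemma f_zero (a : ℕ → ℝ) : f a 0 = a 0 := by
  unfold f
  rw [tsum_eq_single 0]
  · simp
  · intro n hn
    simp [hn]

lemma f_one (a : ℕ → ℝ) : f a 1 = ∑' n, a n := by
  simp [f]

lemma f_add {a b : ℕ → ℝ} (ha : P a) (hb : P b) {t : ℝ} (h0 : 0 ≤ t) (h1 : t < 1) :
    f (fun n => a n + b n) t = f a t + f b t := by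
  unfold f
  rw [← (ha.summable h0 h1).tsum_add (hb.summable h0 h1)]
  simp only [add_mul]

lemma f_smul (k : ℝ) (a : ℕ → ℝ) (t : ℝ) :
    f (fun n => k * a n) t = k * f a t := by
  unfold f
  rw [← tsum_mul_left]
  simp only [mul_assoc]

lemma P.smul {a : ℕ → ℝ} (h : P a) (k : ℝ) : P (fun n => k * a n) := by
  intro r h0 h1
  refine ((h r h0 h1).mul_left |k|).congr fun n => ?_
  rw [abs_mul]
  ring

lemma P.add {a b : ℕ → ℝ} (ha : P a) (hb : P b) : P (fun n => a n + b n) := by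
  intro r h0 h1
  refine Summable.of_nonneg_of_le (fun n => by positivity) (fun n => ?_)
    ((ha r h0 h1).add (hb r h0 h1))
  rw [← add_mul]
  exact mul_le_mul_of_nonneg_right (abs_add_le _ _) (by positivity)

/-- zero derivative inside implies equality at the ends -/
lemma const_of {g : ℝ → ℝ} {x : ℝ} (hx : 0 < x) (hc : ContinuousOn g (Icc 0 x))
    (hd : ∀ t, 0 < t → t < x → HasDerivAt g 0 t) : g x = g 0 := by
  obtain ⟨c, hc1, hc2⟩ := exists_hasDerivAt_eq_slope g (fun _ => 0) hx hc
    (fun t ht => hd t ht.1 ht.2)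
  have : x - 0 ≠ 0 := by linarith
  field_simp at hc2
  linarith

/-! coefficients -/

noncomputable def c (n : ℕ) : ℝ := (Nat.centralBinom n : ℝ) / 4 ^ n

lemma c_zero : c 0 = 1 := by simp [c]

lemma c_pos (n : ℕ) : 0 < c n := by
  unfold c
  have := Nat.centralBinom_pos n
  positivity

lemma c_succ (n : ℕ) : c (n + 1) = c n * ((2 * n + 1) / (2 * (n + 1))) := by
  unfold c
  have h := Nat.succ_mul_centralBinom_succ n
  have h' : ((n : ℝ) + 1) * (Nat.centralBinom (n + 1) : ℝ)
      = 2 * (2 * n + 1) * Nat.centralBinom n := by exact_mod_cast h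
  have hn : (n : ℝ) + 1 ≠ 0 := by positivity
  field_simp
  rw [pow_succ]
  linear_combination 2 * 4 ^ n * h'

lemma c_sq_le (n : ℕ) : c n ^ 2 * (2 * n + 1) ≤ 1 := by
  induction n with
  | zero => simp [c_zero]
  | succ n ih =>
    refine le_trans ?_ ih
    rw [c_succ, mul_pow, mul_assoc]
    refine mul_le_mul_of_nonneg_left ?_ (by positivity)
    push_cast
    rw [div_pow, div_mul_eq_mul_div, div_le_iff₀ (by positivity)]
    have : (0 : ℝ) ≤ n := by positivity
    nlinarith

lemma c_sq_ge (n : ℕ) : 1 ≤ c (n + 1) ^ 2 * (4 * (n + 1)) := by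
  induction n with
  | zero => simp [c_succ, c_zero]; norm_num
  | succ n ih =>
    refine le_trans ih ?_
    rw [c_succ (n + 1), mul_pow, mul_assoc]
    refine mul_le_mul_of_nonneg_left ?_ (by positivity)
    push_cast
    rw [div_pow, div_mul_eq_mul_div, le_div_iff₀ (by positivity)]
    have : (0 : ℝ) ≤ n := by positivity
    nlinarith

lemma c_le_one (n : ℕ) : c n ≤ 1 := by
  have h := c_sq_le n
  have h2 := c_pos n
  have : (0 : ℝ) ≤ n := by positivity
  nlinarith [mul_nonneg this (sq_nonneg (c n))]

lemma c_le (n : ℕ) : c n ≤ 1 / √(n : ℝ) ∨ n = 0 := by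
  rcases Nat.eq_zero_or_pos n with h | h
  · exact Or.inr h
  left
  have hn : (0 : ℝ) < n := by exact_mod_cast h
  rw [le_div_iff₀ (by positivity)]
  have := c_sq_le n
  have h2 := c_pos n
  refine (sq_le_sq₀ (by positivity) (by positivity)).1 ?_
  rw [mul_pow, Real.sq_sqrt hn.le]
  nlinarith [mul_nonneg hn.le (sq_nonneg (c n)), sq_nonneg (c n)]

lemma c_ge (n : ℕ) : 1 / c (n + 1) ≤ 2 * √((n : ℝ) + 1) := by
  have h2 := c_pos (n + 1)
  rw [div_le_iff₀ h2]
  have := c_sq_ge n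
  have hn : (0 : ℝ) < (n : ℝ) + 1 := by positivity
  refine (sq_le_sq₀ (by positivity) (by positivity)).1 ?_
  rw [mul_pow, mul_pow, Real.sq_sqrt hn.le]
  nlinarith

lemma summ32 : Summable (fun n : ℕ => 1 / ((n : ℝ) * √(n : ℝ))) := by
  have : Summable (fun n : ℕ => 1 / (n : ℝ) ^ (3 / 2 : ℝ)) :=
    Real.summable_one_div_nat_rpow.2 (by norm_num)
  refine this.congr fun n => ?_
  rcases Nat.eq_zero_or_pos n with h | h
  · subst h; simp
  have hn : (0 : ℝ) < n := by exact_mod_cast h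
  rw [Real.sqrt_eq_rpow, show (3 / 2 : ℝ) = 1 + 1 / 2 by norm_num, Real.rpow_add hn, Real.rpow_one]

lemma summ_c : Summable (fun n : ℕ => c n / n) := by
  refine Summable.of_nonneg_of_le (fun n => ?_) (fun n => ?_) summ32
  · have := c_pos n
    positivity
  · rcases c_le n with h | h
    · rw [one_div, mul_inv, mul_comm, ← one_div (√(n : ℝ)), div_eq_mul_inv]
      gcongr
    · simp [h]

noncomputable def d (n : ℕ) : ℝ := (harmonic (2 * n) : ℝ) - (harmonic n : ℝ)

lemma d_zero : d 0 = 0 := by simp [d]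

lemma d_succ (n : ℕ) : d (n + 1) = d n + 1 / ((2 * n + 1) * (2 * n + 2)) := by
  unfold d
  rw [show 2 * (n + 1) = 2 * n + 1 + 1 by ring, harmonic_succ, harmonic_succ, harmonic_succ]
  push_cast
  field_simp
  ring

lemma d_nonneg (n : ℕ) : 0 ≤ d n := by
  induction n with
  | zero => simp [d_zero]
  | succ n ih => rw [d_succ]; positivity

lemma d_le (n : ℕ) : d n ≤ 1 - 1 / (2 * n + 1) := by
  induction n with
  | zero => simp [d_zero]
  | succ n ih =>
    rw [d_succ]
    have : (1 : ℝ) / ((2 * n + 1) * (2 * n + 2)) ≤ 1 / (2 * n + 1) - 1 / (2 * n + 3) := by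
      have hn : (0 : ℝ) ≤ n := by positivity
      rw [div_sub_div _ _ (by positivity) (by positivity), div_le_div_iff₀ (by positivity) (by positivity)]
      nlinarith [mul_nonneg hn hn]
    push_cast
    rw [show (2 : ℝ) * (n + 1) + 1 = 2 * n + 3 by ring]
    linarith

lemma d_le_one (n : ℕ) : d n ≤ 1 := by
  have := d_le n
  have : (0 : ℝ) ≤ 1 / (2 * n + 1) := by positivity
  linarith

noncomputable def sg (n : ℕ) : ℝ := (-1) ^ n * c n
noncomputable def rh (n : ℕ) : ℝ := (-1) ^ n * c n / (n + 1)
noncomputable def a2 (n : ℕ) : ℝ := (-1) ^ n * c n / n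
noncomputable def m (n : ℕ) : ℝ := (-1) ^ n * c n * d n
noncomputable def a3 (n : ℕ) : ℝ := (-1) ^ n * c n / n * (d n - 1 / (2 * n))
noncomputable def w (n : ℕ) : ℝ := (-1) ^ n / ((n + 1) * c (n + 1))
noncomputable def a1 (n : ℕ) : ℝ := (-1) ^ (n + 1) / (n ^ 2 * c n) / 2

lemma P_sg : P sg := P_of_bdd 1 fun n => by
  simp only [sg, abs_mul, abs_pow, abs_neg, abs_one, one_pow, one_mul, abs_of_pos (c_pos n)]
  exact c_le_one n

lemma P_m : P m := P_of_bdd 1 fun n => by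
  simp only [m, abs_mul, abs_pow, abs_neg, abs_one, one_pow, one_mul, abs_of_pos (c_pos n),
    abs_of_nonneg (d_nonneg n)]
  exact mul_le_one₀ (c_le_one n) (d_nonneg n) (d_le_one n)

lemma P_rh : P rh := P_of_bdd 1 fun n => by
  have : (0 : ℝ) < (n : ℝ) + 1 := by positivity
  simp only [rh, abs_div, abs_mul, abs_pow, abs_neg, abs_one, one_pow, one_mul,
    abs_of_pos (c_pos n), abs_of_pos this]
  rw [div_le_one this]
  have := c_le_one n
  have : (0 : ℝ) ≤ (n : ℝ) := by positivity
  linarith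

lemma P_w : P w := P_of_bdd 2 fun n => by
  have : (0 : ℝ) < (n : ℝ) + 1 := by positivity
  have h3 := c_pos (n + 1)
  simp only [w, abs_div, abs_mul, abs_pow, abs_neg, abs_one, one_pow,
    abs_of_pos h3, abs_of_pos this]
  rw [div_le_iff₀ (by positivity)]
  have h := c_sq_ge n
  have h2 := c_le_one (n + 1)
  have : c (n + 1) ^ 2 * (4 * ((n : ℝ) + 1)) = 4 * ((n : ℝ) + 1) * c (n + 1) * c (n + 1) := by ring
  by_contra hh
  push Not at hh
  have h4 : (c (n + 1)) ^ 2 * (2 * ((n : ℝ) + 1)) ^ 2 < 1 := by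
    nlinarith
  have hn : (0 : ℝ) ≤ n := by positivity
  nlinarith [mul_nonneg hn (sq_nonneg (c (n + 1))), mul_nonneg (mul_nonneg hn hn) (sq_nonneg (c (n + 1)))]

lemma P_of_summable {a : ℕ → ℝ} (h : Summable fun n => |a n|) : P a := by
  intro r h0 h1
  refine Summable.of_nonneg_of_le (fun n => by positivity) (fun n => ?_) h
  exact mul_le_of_le_one_right (abs_nonneg _) (pow_le_one₀ h0 h1.le)

lemma S_a2 : Summable fun n => |a2 n| := by
  refine summ_c.congr fun n => ?_
  simp only [a2, abs_div, abs_mul, abs_pow, abs_neg, abs_one, one_pow, one_mul,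
    abs_of_pos (c_pos n), Nat.abs_cast]

lemma S_a3 : Summable fun n => |a3 n| := by
  refine Summable.of_nonneg_of_le (fun n => by positivity) (fun n => ?_) summ_c
  have h : |a3 n| = c n / n * |d n - 1 / (2 * n)| := by
    simp only [a3, abs_div, abs_mul, abs_pow, abs_neg, abs_one, one_pow, one_mul,
      abs_of_pos (c_pos n), Nat.abs_cast]
  rw [h]
  apply mul_le_of_le_one_right
  · have := c_pos n
    positivity
  · have h1 := d_nonneg n
    have h2 := d_le_one n
    have h3 : (1 : ℝ) / (2 * n) ≤ 1 := by
      rcases Nat.eq_zero_or_pos n with h | h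
      · simp [h]
      · have : (1 : ℝ) ≤ n := by exact_mod_cast h
        rw [div_le_one (by positivity)]
        linarith
    have h4 : (0 : ℝ) ≤ 1 / (2 * n) := by positivity
    rw [abs_le]
    constructor <;> linarith

lemma S_a1 : Summable fun n => |a1 n| := by
  refine Summable.of_nonneg_of_le (fun n => by positivity) (fun n => ?_) summ32
  rcases n with _ | n
  · simp [a1]
  have h3 := c_pos (n + 1)
  have hn : (0 : ℝ) < (n : ℝ) + 1 := by positivity
  have h : |a1 (n + 1)| = 1 / ((n : ℝ) + 1) ^ 2 * (1 / c (n + 1)) / 2 := by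
    simp only [a1, abs_div, abs_mul, abs_pow, abs_neg, abs_one, one_pow,
      abs_of_pos h3, Nat.abs_cast, abs_two]
    push_cast
    field_simp
  rw [h]
  have h5 := c_ge n
  calc _ ≤ 1 / ((n : ℝ) + 1) ^ 2 * (2 * √((n : ℝ) + 1)) / 2 := by gcongr
    _ = _ := by
      push_cast
      have : √((n : ℝ) + 1) ^ 2 = (n : ℝ) + 1 := Real.sq_sqrt hn.le
      have h7 : 0 < √((n : ℝ) + 1) := by positivity
      field_simp
      exact this

noncomputable def s (t : ℝ) : ℝ := √(1 + t)
noncomputable def l (t : ℝ) : ℝ := log 2 - log (1 + s t)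

lemma s_pos {t : ℝ} (h : 0 ≤ t) : 0 < s t := by unfold s; positivity

lemma s_sq {t : ℝ} (h : 0 ≤ t) : s t ^ 2 = 1 + t := Real.sq_sqrt (by positivity)

lemma s_deriv {t : ℝ} (h : 0 < t) : HasDerivAt s (1 / (2 * s t)) t := by
  have := ((hasDerivAt_id t).const_add 1).sqrt (by simp; positivity)
  refine HasDerivAt.congr_deriv this (Eq.symm ?_)
  simp [s]

lemma s_cont : Continuous s := by unfold s; fun_prop

lemma l_deriv {t : ℝ} (h : 0 < t) : HasDerivAt l (-(1 / (2 * s t * (1 + s t)))) t := by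
  have hs := s_pos h.le
  have := (((s_deriv h).const_add 1).log (by positivity)).const_sub (log 2)
  refine HasDerivAt.congr_deriv this (Eq.symm ?_)
  field_simp

lemma l_cont (x : ℝ) : ContinuousOn l (Icc 0 x) := by
  unfold l
  apply ContinuousOn.sub continuousOn_const
  apply ContinuousOn.log
  · exact (continuous_const.add s_cont).continuousOn
  · intro t ht
    have := s_pos ht.1
    positivity

lemma s_zero : s 0 = 1 := by simp [s]

lemma l_zero : l 0 = 0 := by simp [l, s_zero]; norm_num

lemma sg_eq {x : ℝ} (h0 : 0 < x) (h1 : x < 1) : s x * f sg x = 1 := by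
  have := const_of (g := fun t => s t * f sg t) h0
    (s_cont.continuousOn.mul (f_cont P_sg h0.le h1)) ?_
  · simp only [s_zero, f_zero] at this
    rw [this]
    simp [sg, c_zero]
  · intro t ht0 ht
    have ht1 := ht.trans h1
    have hd := (s_deriv ht0).mul (f_hasDerivAt P_sg ht0 ht1)
    refine HasDerivAt.congr_deriv hd (Eq.symm ?_)
    have e := f_t_der P_sg ht0.le ht1
    have e2 : f (fun n => ((n : ℝ) + 1) * sg (n + 1)) t
        = f (fun n => (-1) * ((n : ℝ) * sg n) + (-1 / 2) * sg n) t := by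
      congr 1
      funext n
      simp only [sg, c_succ, pow_succ]
      field_simp
      ring
    rw [f_add (P_sg.mul_n.smul _) (P_sg.smul _) ht0.le ht1, f_smul, f_smul] at e2
    have hs := s_pos ht0.le
    have hs2 := s_sq ht0.le
    field_simp
    rw [hs2]
    linear_combination -2 * e2 - 2 * e

lemma rh_eq {x : ℝ} (h0 : 0 < x) (h1 : x < 1) : f rh x * (1 + s x) = 2 := by
  have e1 := sg_eq h0 h1
  have e2 := f_split P_sg h0.le h1
  have hsg0 : sg 0 = 1 := by simp [sg, c_zero]
  have e3 : f rh x = f (fun n => 2 * sg (n + 1) + 2 * sg n) x := by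
    congr 1
    funext n
    simp only [sg, rh, c_succ, pow_succ]
    field_simp
    ring
  rw [f_add (P_sg.shift.smul _) (P_sg.smul _) h0.le h1, f_smul, f_smul] at e3
  have hs := s_pos h0.le
  have hs2 := s_sq h0.le
  rw [hsg0] at e2
  have e4 : x * f rh x = 2 * (s x - 1) := by
    rw [e3]
    have : f sg x * (1 + x) = s x := by
      rw [← hs2]
      linear_combination s x * e1
    linear_combination -2 * e2 + 2 * this
  have : x * (f rh x * (1 + s x)) = x * 2 := by
    linear_combination (1 + s x) * e4 + 2 * hs2
  exact mul_left_cancel₀ h0.ne' this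

lemma m_eq {x : ℝ} (h0 : 0 < x) (h1 : x < 1) : s x * f m x = l x := by
  have := const_of (g := fun t => s t * f m t - l t) h0
    ((s_cont.continuousOn.mul (f_cont P_m h0.le h1)).sub (l_cont x)) ?_
  · simp only [s_zero, f_zero, l_zero] at this
    have hm : m 0 = 0 := by simp [m, d_zero]
    rw [hm] at this
    linarith
  · intro t ht0 ht
    have ht1 := ht.trans h1
    have hd := ((s_deriv ht0).mul (f_hasDerivAt P_m ht0 ht1)).sub (l_deriv ht0)
    refine HasDerivAt.congr_deriv hd (Eq.symm ?_)
    have e := f_t_der P_m ht0.le ht1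
    have e2 : f (fun n => ((n : ℝ) + 1) * m (n + 1)) t
        = f (fun n => ((-1) * ((n : ℝ) * m n) + (-1 / 2) * m n) + (-1 / 4) * rh n) t := by
      congr 1
      funext n
      simp only [m, rh, c_succ, d_succ, pow_succ]
      field_simp
      ring
    rw [f_add ((P_m.mul_n.smul _).add (P_m.smul _)) (P_rh.smul _) ht0.le ht1,
      f_add (P_m.mul_n.smul _) (P_m.smul _) ht0.le ht1, f_smul, f_smul, f_smul] at e2
    have e3 := rh_eq ht0 ht1
    have hs := s_pos ht0.le
    have hs2 := s_sq ht0.le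
    have hr : f rh t = 2 / (1 + s t) := by field_simp; exact e3
    rw [hr] at e2
    field_simp at e2 ⊢
    rw [hs2]
    field_simp at e
    linear_combination (-(1 / 4)) * e2 - 2 * (1 + s t) * e

lemma a2_eq {x : ℝ} (h0 : 0 < x) (h1 : x ≤ 1) : f a2 x = 2 * l x := by
  have P2 := P_of_summable S_a2
  have := const_of (g := fun t => f a2 t - 2 * l t) h0
    (((f_cont_one S_a2).mono (Icc_subset_Icc_right h1)).sub
      (continuousOn_const.mul (l_cont x))) ?_
  · simp only [f_zero, l_zero] at this
    have hm : a2 0 = 0 := by simp [a2]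
    rw [hm] at this
    linarith
  · intro t ht0 ht
    have ht1 := ht.trans_le h1
    have hd := (f_hasDerivAt P2 ht0 ht1).sub ((l_deriv ht0).const_mul 2)
    refine HasDerivAt.congr_deriv hd (Eq.symm ?_)
    have e2 : f (fun n => ((n : ℝ) + 1) * a2 (n + 1)) t = f (fun n => sg (n + 1)) t := by
      congr 1
      funext n
      simp only [a2, sg]
      push_cast
      field_simp
    have e := f_split P_sg ht0.le ht1
    have hsg0 : sg 0 = 1 := by simp [sg, c_zero]
    have e1 := sg_eq ht0 ht1
    rw [e2]
    have hs := s_pos ht0.le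
    have hs2 := s_sq ht0.le
    have : t * (f (fun n => sg (n + 1)) t * (s t * (1 + s t))) = t * (-1) := by
      rw [hsg0] at e
      linear_combination (-(s t * (1 + s t))) * e + (1 + s t) * e1 - hs2
    have := mul_left_cancel₀ ht0.ne' this
    field_simp
    linarith

lemma a3_eq : f a3 1 = l 1 ^ 2 := by
  have P2 := P_of_summable S_a2
  have P3 := P_of_summable S_a3
  have := const_of (g := fun t => f a3 t - l t ^ 2) one_pos
    ((f_cont_one S_a3).sub ((l_cont 1).pow 2)) ?_
  · simp only [f_zero, l_zero] at this
    have hm : a3 0 = 0 := by simp [a3]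
    rw [hm] at this
    linarith
  · intro t ht0 ht1
    have hd := (f_hasDerivAt P3 ht0 ht1).sub ((l_deriv ht0).pow 2)
    refine HasDerivAt.congr_deriv hd (Eq.symm ?_)
    have e := f_t_der P3 ht0.le ht1
    have e2 : f (fun n => (n : ℝ) * a3 n) t = f (fun n => m n + (-1 / 2) * a2 n) t := by
      congr 1
      funext n
      rcases Nat.eq_zero_or_pos n with h | h
      · subst h
        simp [a2, m, d_zero]
      · have : (n : ℝ) ≠ 0 := by positivity
        simp only [a2, a3, m]
        field_simp
        ring
    rw [f_add P_m (P2.smul _) ht0.le ht1, f_smul, a2_eq ht0 ht1.le] at e2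
    have e1 := m_eq ht0 ht1
    have hs := s_pos ht0.le
    have hs2 := s_sq ht0.le
    have key : t * (f (fun n => ((n : ℝ) + 1) * a3 (n + 1)) t * (s t * (1 + s t)))
        = t * (-(l t)) := by
      rw [e2] at e
      linear_combination (s t * (1 + s t)) * e + (1 + s t) * e1 - l t * hs2
    have := mul_left_cancel₀ ht0.ne' key
    push_cast
    field_simp
    linarith

lemma w_ode {t : ℝ} (h0 : 0 < t) (h1 : t < 1) :
    (1 + t) * (f w t + 2 * f (fun n => (n : ℝ) * w n) t) + t * f w t = 2 := by
  have hP := P_w.add (P_w.mul_n.smul 2)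
  have e1 := f_add P_w (P_w.mul_n.smul 2) h0.le h1
  have e2 := f_split hP h0.le h1
  have e3 : f (fun n => w (n + 1) + 2 * (((n + 1 : ℕ) : ℝ) * w (n + 1))) t
      = f (fun n => (-2) * w n + (-2) * ((n : ℝ) * w n)) t := by
    congr 1
    funext n
    have := c_pos (n + 1)
    simp only [w, c_succ (n + 1), pow_succ]
    push_cast
    field_simp
    ring
  rw [f_add (P_w.smul _) (P_w.mul_n.smul _) h0.le h1, f_smul, f_smul] at e3
  rw [f_smul] at e1
  have hw : w 0 = 2 := by simp [w, c_succ, c_zero]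
  rw [e3, hw] at e2
  simp only [Nat.cast_zero, zero_mul, mul_zero, add_zero] at e2
  linear_combination (-1 : ℝ) * e1 + e2

lemma w_eq {x : ℝ} (h0 : 0 < x) (h1 : x < 1) :
    √(1 + x ^ 2) * x * f w (x ^ 2) = 2 * arsinh x := by
  have hx2 : x ^ 2 < 1 := by nlinarith
  have := const_of (g := fun t => √(1 + t ^ 2) * t * f w (t ^ 2) - 2 * arsinh t) h0 ?_ ?_
  · simp at this
    linarith
  · apply ContinuousOn.sub
    · apply ContinuousOn.mul
      · fun_prop
      · refine (f_cont P_w (by positivity) hx2).comp (by fun_prop) ?_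
        intro t ht
        exact ⟨by positivity, pow_le_pow_left₀ ht.1 ht.2 2⟩
    · exact (continuous_const.mul Real.continuous_arsinh).continuousOn
  · intro t ht0 ht
    have ht1 := ht.trans h1
    have ht2 : t ^ 2 < 1 := by nlinarith
    have ht3 : 0 < t ^ 2 := by positivity
    have hq := ((hasDerivAt_pow 2 t).const_add 1).sqrt (by positivity)
    have hf := HasDerivAt.comp (h := fun y : ℝ => y ^ 2) t (f_hasDerivAt P_w ht3 ht2) (hasDerivAt_pow 2 t)
    have hd := ((hq.mul (hasDerivAt_id t)).mul hf).sub ((hasDerivAt_arsinh t).const_mul 2)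
    refine HasDerivAt.congr_deriv hd (Eq.symm ?_)
    have e := w_ode ht3 ht2
    have e1 := f_t_der P_w ht3.le ht2
    rw [← e1] at e
    have hs : 0 < √(1 + t ^ 2) := by positivity
    have hs2 : √(1 + t ^ 2) ^ 2 = 1 + t ^ 2 := Real.sq_sqrt (by positivity)
    simp only [Function.comp, Pi.mul_apply, id]
    field_simp
    rw [hs2]
    push_cast
    simp only [pow_one]
    linear_combination (-2 : ℝ) * e

lemma a1_eq : f a1 1 = arsinh 1 ^ 2 := by
  have P1 := P_of_summable S_a1
  have := const_of (g := fun t => f a1 (t ^ 2) - arsinh t ^ 2) one_pos ?_ ?_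
  · simp [f_zero] at this
    have hm : a1 0 = 0 := by simp [a1]
    rw [hm] at this
    linarith
  · apply ContinuousOn.sub
    · refine (f_cont_one S_a1).comp (by fun_prop) ?_
      intro t ht
      exact ⟨by positivity, pow_le_one₀ ht.1 ht.2⟩
    · exact (Real.continuous_arsinh.pow 2).continuousOn
  · intro t ht0 ht1
    have ht2 : t ^ 2 < 1 := by nlinarith
    have ht3 : 0 < t ^ 2 := by positivity
    have hf := HasDerivAt.comp (h := fun y : ℝ => y ^ 2) t (f_hasDerivAt P1 ht3 ht2) (hasDerivAt_pow 2 t)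
    have hd := hf.sub ((hasDerivAt_arsinh t).pow 2)
    refine HasDerivAt.congr_deriv hd (Eq.symm ?_)
    have e2 : f (fun n => ((n : ℝ) + 1) * a1 (n + 1)) (t ^ 2)
        = f (fun n => (1 / 2) * w n) (t ^ 2) := by
      congr 1
      funext n
      have := c_pos (n + 1)
      simp only [a1, w, pow_succ]
      push_cast
      field_simp
    rw [e2, f_smul]
    have e := w_eq ht0 ht1
    have hs : 0 < √(1 + t ^ 2) := by positivity
    push_cast
    field_simp
    linear_combination (-1 : ℝ) * e

lemma shift_sum {a : ℕ → ℝ} (h : Summable fun n => |a n|) (h0 : a 0 = 0) :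
    Summable (fun n => a (n + 1)) ∧ ∑' n, a (n + 1) = f a 1 := by
  have hs : Summable a := h.of_abs
  refine ⟨(summable_nat_add_iff 1).2 hs, ?_⟩
  rw [f_one, hs.tsum_eq_zero_add, h0, zero_add]

lemma t1 : (fun n : ℕ =>
      (-1 : ℝ) ^ n * (4 : ℝ) ^ n / (((n : ℝ) + 1) ^ 2 * (Nat.centralBinom (n + 1) : ℝ)))
    = fun n => (1 / 2) * a1 (n + 1) := by
  funext n
  have h : (Nat.centralBinom (n + 1) : ℝ) ≠ 0 := by
    exact_mod_cast Nat.centralBinom_ne_zero (n + 1)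
  simp only [a1, c, pow_succ]
  push_cast
  field_simp
  ring

lemma t2 : (fun n : ℕ =>
      (-1 : ℝ) ^ (n + 1) * (Nat.centralBinom (n + 1) : ℝ) /
        ((4 : ℝ) ^ (n + 1) * ((n : ℝ) + 1))) = fun n => a2 (n + 1) := by
  funext n
  simp only [a2, c]
  push_cast
  field_simp

lemma t3 : (fun n : ℕ =>
      (-1 : ℝ) ^ n * (Nat.centralBinom (n + 1) : ℝ) /
          ((4 : ℝ) ^ (n + 1) * ((n : ℝ) + 1) ^ 2) *
        (2 + 2 * ((n : ℝ) + 1) * ((harmonic n : ℝ) - (harmonic (2 * n + 1) : ℝ))))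
    = fun n => 2 * a3 (n + 1) := by
  funext n
  simp only [a3, c, d]
  rw [show 2 * (n + 1) = 2 * n + 1 + 1 by ring, harmonic_succ (2 * n + 1), harmonic_succ n]
  push_cast
  rw [pow_succ (-1 : ℝ) n]
  field_simp
  ring

end AIC

open AIC in

/-- 2·∑_{n=1}^∞ (-1)^{n-1}·4^{n-1}/(n²·C(2n,n)) = log²2
- (∑_{n=1}^∞ (-1)ⁿ·C(2n,n)/(4ⁿ·n))·log 2
+ (1/2)·∑_{n=1}^∞ ((-1)^{n+1}·C(2n,n)/(4ⁿ·n²))·(2 + 2n(H_{n-1} - H_{2n-1})),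
where all three series converge. -/
theorem alternating_inverse_centralBinom_nsq_identity :
    Summable (fun n : ℕ =>
      (-1 : ℝ) ^ n * (4 : ℝ) ^ n / (((n : ℝ) + 1) ^ 2 * (Nat.centralBinom (n + 1) : ℝ))) ∧
    Summable (fun n : ℕ =>
      (-1 : ℝ) ^ (n + 1) * (Nat.centralBinom (n + 1) : ℝ) /
        ((4 : ℝ) ^ (n + 1) * ((n : ℝ) + 1))) ∧
    Summable (fun n : ℕ =>
      (-1 : ℝ) ^ n * (Nat.centralBinom (n + 1) : ℝ) /
          ((4 : ℝ) ^ (n + 1) * ((n : ℝ) + 1) ^ 2) *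
        (2 + 2 * ((n : ℝ) + 1) * ((harmonic n : ℝ) - (harmonic (2 * n + 1) : ℝ)))) ∧
    2 * ∑' n : ℕ,
        (-1 : ℝ) ^ n * (4 : ℝ) ^ n / (((n : ℝ) + 1) ^ 2 * (Nat.centralBinom (n + 1) : ℝ)) =
      Real.log 2 ^ 2
        - (∑' n : ℕ,
            (-1 : ℝ) ^ (n + 1) * (Nat.centralBinom (n + 1) : ℝ) /
              ((4 : ℝ) ^ (n + 1) * ((n : ℝ) + 1))) * Real.log 2
        + (1 / 2) * ∑' n : ℕ,
            (-1 : ℝ) ^ n * (Nat.centralBinom (n + 1) : ℝ) /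
                ((4 : ℝ) ^ (n + 1) * ((n : ℝ) + 1) ^ 2) *
              (2 + 2 * ((n : ℝ) + 1) * ((harmonic n : ℝ) - (harmonic (2 * n + 1) : ℝ))) := by

  have h1 := AIC.shift_sum S_a1 (by simp [a1])
  have h2 := shift_sum S_a2 (by simp [a2])
  have h3 := shift_sum S_a3 (by simp [a3])
  rw [t1, t2, t3, tsum_mul_left, tsum_mul_left, h1.2, h2.2, h3.2, a1_eq, a2_eq one_pos le_rfl,
    a3_eq]
  refine ⟨h1.1.mul_left _, h2.1, h3.1.mul_left _, ?_⟩
  have : arsinh 1 = Real.log 2 - l 1 := by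
    simp only [arsinh, l, s]
    norm_num
  rw [this]
  ring
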